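/- In the DP setting: for every v ∈ V_S and every X ⊆ V_R, if D[X, v] < ∞ then there exists a desirable mapping of the induced subrequest G_R[X] into the subtree T_v whose induced cost is at most D[X, v]. -/

import Mathlib

open scoped BigOperators NNReal ENNReal Classical

/-- A rooted tree on vertex set `V`: a root together with a parent function such that the
root is its own parent and every vertex reaches the root by iterating the parent function.
The associated bidirectional tree substrate has the directed edges `(u, v)` and `(v, u)`
for every non-root `u` with parent `v`. -/
structure RTree (V : Type*) where
  root : V
  parent : V → V
  parent_root : parent root = root
  reaches_root : ∀ v : V, ∃ n : ℕ, parent^[n] v = root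

namespace RTree

variable {V : Type*}

/-- `u` is a child of `v`. -/
def IsChild (T : RTree V) (u v : V) : Prop := u ≠ v ∧ T.parent u = v

/-- `w` lies in the subtree `T_v` rooted at `v` (i.e. `w` is `v` or a descendant of `v`). -/
def InSubtree (T : RTree V) (v w : V) : Prop := ∃ n : ℕ, T.parent^[n] w = v

/-- The directed edge set of the bidirectional tree substrate associated to a rooted tree:
both orientations of every parent-child pair. -/
noncomputable def edges [Fintype V] [DecidableEq V] (T : RTree V) : Finset (V × V) :=
  Finset.univ.filter fun e => e.1 ≠ e.2 ∧ (T.parent e.1 = e.2 ∨ T.parent e.2 = e.1)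

end RTree

/-- A VNEP instance: a substrate digraph `(VS, ES)` with `τ`-dimensional node and edge
capacities (`dSv`, `dSe`, valued in `[0, ∞]`) and costs (`cSv`, `cSe`), and a request
digraph `(VR, ER)` with `τ`-dimensional node and edge demands (`dRv`, `dRe`). -/
structure VNEP (VS VR : Type*) (τ : ℕ) where
  ES : Finset (VS × VS)
  ER : Finset (VR × VR)
  dSv : VS → Fin τ → ℝ≥0∞
  dSe : VS × VS → Fin τ → ℝ≥0∞
  cSv : VS → Fin τ → ℝ≥0
  cSe : VS × VS → Fin τ → ℝ≥0
  dRv : VR → Fin τ → ℝ≥0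
  dRe : VR × VR → Fin τ → ℝ≥0

/-- The list of directed edges traversed by a path given as a list of vertices. -/
def pathEdges {α : Type*} (p : List α) : List (α × α) := p.zip p.tail

/-- A simple directed path from `a` to `b` with respect to the edge relation `E`, given as
its (nonempty, duplicate-free) list of vertices; a single-vertex list is a path of length
zero. -/
def IsDiPath {α : Type*} (E : α → α → Prop) (a b : α) (p : List α) : Prop :=
  p.head? = some a ∧ p.getLast? = some b ∧ List.Chain' E p ∧ p.Nodup

/-- A mapping of a request into a substrate: `mV` maps request nodes to substrate nodes and
`mE` assigns to each request edge a list of substrate vertices (its intended path). -/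
structure Mapping (VS VR : Type*) where
  mV : VR → VS
  mE : VR × VR → List VS

section VNEPDefs

variable {VS VR : Type*} {τ : ℕ}

/-- A mapping is valid if every request edge is mapped to a simple directed path in the
substrate between the images of its endpoints. -/
def Mapping.Valid (I : VNEP VS VR τ) (M : Mapping VS VR) : Prop :=
  ∀ e ∈ I.ER, IsDiPath (fun a b => (a, b) ∈ I.ES) (M.mV e.1) (M.mV e.2) (M.mE e)

/-- A mapping is feasible if it is valid and all node and edge capacities are respected by
the cumulative demands mapped onto them. -/
noncomputable def Mapping.Feasible [Fintype VR] [DecidableEq VS] (I : VNEP VS VR τ)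
    (M : Mapping VS VR) : Prop :=
  M.Valid I ∧
  (∀ v : VS, ∀ t : Fin τ,
    ((∑ w ∈ Finset.univ.filter (fun w => M.mV w = v), I.dRv w t : ℝ≥0) : ℝ≥0∞) ≤ I.dSv v t) ∧
  (∀ eS ∈ I.ES, ∀ t : Fin τ,
    ((∑ eR ∈ I.ER.filter (fun eR => eS ∈ pathEdges (M.mE eR)), I.dRe eR t : ℝ≥0) : ℝ≥0∞) ≤
      I.dSe eS t)

/-- The cost of a mapping: `∑_w ⟨d_R(w), c_S(m_V(w))⟩ + ∑_{e ∈ E_R} ∑_{e' ∈ m_E(e)}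
⟨d_R(e), c_S(e')⟩`. -/
noncomputable def Mapping.cost [Fintype VR] [DecidableEq VS] (I : VNEP VS VR τ)
    (M : Mapping VS VR) : ℝ≥0 :=
  (∑ w : VR, ∑ t, I.dRv w t * I.cSv (M.mV w) t) +
    ∑ e ∈ I.ER, ∑ e' ∈ (pathEdges (M.mE e)).toFinset, ∑ t, I.dRe e t * I.cSe e' t

end VNEPDefs
section DPDefs

variable {VS VR : Type*} {τ : ℕ}

/-- The set of children of `v` in the rooted tree `T`. -/
noncomputable def childrenOf [Fintype VS] (T : RTree VS) (v : VS) : Finset VS :=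
  Finset.univ.filter fun w => T.IsChild w v

/-- `cut(A)`: the request edges leaving `A`. -/
noncomputable def cutP (I : VNEP VS VR τ) (A : Finset VR) : Finset (VR × VR) :=
  I.ER.filter fun e => e.1 ∈ A ∧ e.2 ∉ A

/-- `cut⁻(A)`: the request edges entering `A`. -/
noncomputable def cutN (I : VNEP VS VR τ) (A : Finset VR) : Finset (VR × VR) :=
  I.ER.filter fun e => e.1 ∉ A ∧ e.2 ∈ A

/-- `E(G_R[X])`: the request edges with both endpoints in `X`. -/
noncomputable def ERin (I : VNEP VS VR τ) (X : Finset VR) : Finset (VR × VR) :=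
  I.ER.filter fun e => e.1 ∈ X ∧ e.2 ∈ X

/-- The auxiliary function `f(v, x, R)` of the dynamic program. -/
noncomputable def fDP (I : VNEP VS VR τ) (D : Finset VR → VS → ℝ≥0∞) (v x : VS)
    (R : Finset VR) : ℝ≥0∞ :=
  if (∀ t, ((∑ e ∈ cutP I R, I.dRe e t : ℝ≥0) : ℝ≥0∞) ≤ I.dSe (x, v) t) ∧
      (∀ t, ((∑ e ∈ cutN I R, I.dRe e t : ℝ≥0) : ℝ≥0∞) ≤ I.dSe (v, x) t) then
    D R x + ((∑ e ∈ cutN I R, ∑ t, I.dRe e t * I.cSe (v, x) t : ℝ≥0) : ℝ≥0∞)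
          + ((∑ e ∈ cutP I R, ∑ t, I.dRe e t * I.cSe (x, v) t : ℝ≥0) : ℝ≥0∞)
  else ⊤

/-- `D` is the DP table: it satisfies the defining recurrence of the dynamic program
(leaf case and internal-node case). -/
def IsDPTable [Fintype VS] (I : VNEP VS VR τ) (T : RTree VS)
    (D : Finset VR → VS → ℝ≥0∞) : Prop :=
  (∀ v : VS, childrenOf T v = ∅ → ∀ R : Finset VR,
    D R v = if (∀ t, ((∑ w ∈ R, I.dRv w t : ℝ≥0) : ℝ≥0∞) ≤ I.dSv v t) then
      ((∑ w ∈ R, ∑ t, I.dRv w t * I.cSv v t : ℝ≥0) : ℝ≥0∞) else ⊤) ∧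
  (∀ v a b : VS, a ≠ b → childrenOf T v = {a, b} → ∀ R : Finset VR,
    D R v = ⨅ A ∈ R.powerset, fDP I D v a A + fDP I D v b (R \ A))

/-- The DP setting: the substrate is the bidirectional tree given by `T`, every node of `T`
is a leaf or has exactly two children, and every non-leaf node has capacity `0`. -/
def DPSetting [Fintype VS] [DecidableEq VS] (I : VNEP VS VR τ) (T : RTree VS) : Prop :=
  I.ES = T.edges ∧
  (∀ v : VS, childrenOf T v = ∅ ∨ ∃ a b : VS, a ≠ b ∧ childrenOf T v = {a, b}) ∧
  (∀ v : VS, childrenOf T v ≠ ∅ → I.dSv v = 0)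

/-- The substrate edge `eS` lies on the directed (upward) path in `T_v` from `w` to `v`. -/
def onUp (T : RTree VS) (v w : VS) (eS : VS × VS) : Prop :=
  ∃ i : ℕ, T.parent^[i] w = eS.1 ∧ T.parent eS.1 = eS.2 ∧ ∀ j ≤ i, T.parent^[j] w ≠ v

/-- The substrate edge `eS` lies on the directed (downward) path in `T_v` from `v` to `w`. -/
def onDown (T : RTree VS) (v w : VS) (eS : VS × VS) : Prop := onUp T v w (eS.2, eS.1)

/-- The edge set of the directed path in `T_v` from `w` up to `v`. -/
noncomputable def upEdges [Fintype VS] (T : RTree VS) (v w : VS) : Finset (VS × VS) :=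
  Finset.univ.filter fun eS => onUp T v w eS

/-- The edge set of the directed path in `T_v` from `v` down to `w`. -/
noncomputable def downEdges [Fintype VS] (T : RTree VS) (v w : VS) : Finset (VS × VS) :=
  Finset.univ.filter fun eS => onDown T v w eS

/-- `E^v_{eS}(X)`: the request edges of `cut(X)` whose source is mapped so that `eS` lies on
the upward path to `v`, together with the request edges of `cut⁻(X)` whose target is mapped
so that `eS` lies on the downward path from `v`. -/
noncomputable def EvSet (I : VNEP VS VR τ) (T : RTree VS) (v : VS) (X : Finset VR)
    (mV : VR → VS) (eS : VS × VS) : Finset (VR × VR) :=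
  (cutP I X).filter (fun e => onUp T v (mV e.1) eS) ∪
    (cutN I X).filter (fun e => onDown T v (mV e.2) eS)

/-- A desirable mapping of `G_R[X]` into `T_v`: a feasible mapping of the induced subrequest
into the subtree `T_v` such that every edge of `T_v` moreover has enough remaining capacity
for the cut edges routed through it towards/from `v`. -/
def Desirable (I : VNEP VS VR τ) (T : RTree VS) (v : VS) (X : Finset VR)
    (M : Mapping VS VR) : Prop :=
  (∀ w ∈ X, T.InSubtree v (M.mV w)) ∧
  (∀ e ∈ ERin I X, IsDiPath (fun a b => (a, b) ∈ I.ES) (M.mV e.1) (M.mV e.2) (M.mE e) ∧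
    ∀ x ∈ M.mE e, T.InSubtree v x) ∧
  (∀ s : VS, ∀ t : Fin τ,
    ((∑ w ∈ X.filter (fun w => M.mV w = s), I.dRv w t : ℝ≥0) : ℝ≥0∞) ≤ I.dSv s t) ∧
  (∀ eS ∈ I.ES, T.InSubtree v eS.1 → T.InSubtree v eS.2 → ∀ t : Fin τ,
    (((∑ eR ∈ (ERin I X).filter (fun eR => eS ∈ pathEdges (M.mE eR)), I.dRe eR t) +
        (∑ e ∈ EvSet I T v X M.mV eS, I.dRe e t) : ℝ≥0) : ℝ≥0∞) ≤ I.dSe eS t)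

/-- The induced cost of a mapping of `G_R[X]` into `T_v`: the cost of mapping the nodes of
`X` and the edges of `G_R[X]`, plus for each edge of `cut(X)` (resp. `cut⁻(X)`) the cost of
the path from the image of its source up to `v` (resp. from `v` down to the image of its
target). -/
noncomputable def inducedCost [Fintype VS] [DecidableEq VS] (I : VNEP VS VR τ)
    (T : RTree VS) (v : VS) (X : Finset VR) (M : Mapping VS VR) : ℝ≥0 :=
  (∑ w ∈ X, ∑ t, I.dRv w t * I.cSv (M.mV w) t) +
  (∑ e ∈ ERin I X, ∑ e' ∈ (pathEdges (M.mE e)).toFinset, ∑ t, I.dRe e t * I.cSe e' t) +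
  (∑ e ∈ cutP I X, ∑ e' ∈ upEdges T v (M.mV e.1), ∑ t, I.dRe e t * I.cSe e' t) +
  (∑ e ∈ cutN I X, ∑ e' ∈ downEdges T v (M.mV e.2), ∑ t, I.dRe e t * I.cSe e' t)

end DPDefs

/-!
A mapping of `G_R[X]` into `T_x` is also a mapping into `T_v` when `x` is a child of `v`; only the
edges of `cut(X)` and `cut⁻(X)` then occupy more of the tree, namely the two substrate edges between
`x` and `v`, and `f(v, x, X)` charges exactly for this. If `a` and `b` are the children of `v` and
`A`, `B` are disjoint, desirable mappings of `G_R[A]` into `T_a` and of `G_R[B]` into `T_b` combine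
into one of `G_R[A ∪ B]` into `T_v`: a request edge between `A` and `B` climbs to `v` and descends
into the other branch, over substrate edges already reserved for it as a cut edge of both sets. Each
substrate edge of `T_v` belongs to the branch of only one child, so no capacity is used twice, and
the costs add up. The leaves of the tree and an optimal partition at every inner node then give the
result by induction from the leaves upwards.
-/

namespace RTree

variable {V : Type*} {T : RTree V} {a b v w x y z : V}

theorem InSubtree.refl (T : RTree V) (v : V) : T.InSubtree v v := ⟨0, rfl⟩

theorem InSubtree.trans (hvw : T.InSubtree v w) (hwx : T.InSubtree w x) : T.InSubtree v x := by
  obtain ⟨n, rfl⟩ := hvw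
  obtain ⟨m, rfl⟩ := hwx
  exact ⟨n + m, Function.iterate_add_apply _ _ _ _⟩

theorem inSubtree_parent_self (T : RTree V) (x : V) : T.InSubtree (T.parent x) x := ⟨1, rfl⟩

theorem IsChild.inSubtree (h : T.IsChild a v) : T.InSubtree v a := ⟨1, h.2⟩

theorem InSubtree.parent_of_ne (h : T.InSubtree v x) (hx : x ≠ v) :
    T.InSubtree v (T.parent x) := by
  obtain ⟨_ | n, hn⟩ := h
  · exact absurd hn hx
  · exact ⟨n, hn⟩

theorem InSubtree.parent_ne (h : T.InSubtree v x) (hx : x ≠ v) : T.parent x ≠ x := by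
  obtain ⟨n, rfl⟩ := h
  exact fun hfix => hx (Function.iterate_fixed hfix n).symm

theorem eq_root_of_isPeriodicPt {n : ℕ} (hn : 0 < n) (h : Function.IsPeriodicPt T.parent n x) :
    x = T.root := by
  obtain ⟨m, hm⟩ := T.reaches_root x
  obtain ⟨k, hk⟩ := Nat.exists_eq_add_of_le' (Nat.le_mul_of_pos_left m hn)
  calc x = T.parent^[n * m] x := (h.mul_const m).eq.symm
    _ = T.parent^[k] (T.parent^[m] x) := by rw [hk, Function.iterate_add_apply]
    _ = T.root := by rw [hm, Function.iterate_fixed T.parent_root]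

theorem InSubtree.antisymm (hvw : T.InSubtree v w) (hwv : T.InSubtree w v) : v = w := by
  obtain ⟨n, rfl⟩ := hvw
  obtain ⟨m, hm⟩ := hwv
  rcases n.eq_zero_or_pos with rfl | hn
  · rfl
  · have hw : w = T.root := eq_root_of_isPeriodicPt (Nat.add_pos_right m hn)
      ((Function.iterate_add_apply _ _ _ _).trans hm)
    rw [hw, Function.iterate_fixed T.parent_root]

theorem InSubtree.total (ha : T.InSubtree a x) (hb : T.InSubtree b x) :
    T.InSubtree a b ∨ T.InSubtree b a := by
  obtain ⟨n, rfl⟩ := ha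
  obtain ⟨m, rfl⟩ := hb
  rcases le_total n m with h | h <;> obtain ⟨k, rfl⟩ := Nat.exists_eq_add_of_le' h
  · exact .inr ⟨k, (Function.iterate_add_apply _ _ _ _).symm⟩
  · exact .inl ⟨k, (Function.iterate_add_apply _ _ _ _).symm⟩

theorem IsChild.not_inSubtree (h : T.IsChild a v) : ¬T.InSubtree a v :=
  fun hav => h.1 (hav.antisymm h.inSubtree)

theorem IsChild.eq_of_inSubtree (ha : T.IsChild a v) (hb : T.IsChild b v)
    (hax : T.InSubtree a x) (hbx : T.InSubtree b x) : a = b := by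
  have eq_of_inSubtree {c d : V} (hc : T.IsChild c v) (hd : T.IsChild d v)
      (hcd : T.InSubtree c d) : d = c := by
    by_contra hne
    exact hc.not_inSubtree (hd.2 ▸ hcd.parent_of_ne hne)
  rcases hax.total hbx with hab | hba
  · exact (eq_of_inSubtree ha hb hab).symm
  · exact eq_of_inSubtree hb ha hba

@[elab_as_elim]
theorem InSubtree.induction_on {motive : ∀ x, T.InSubtree v x → Prop} (h : T.InSubtree v x)
    (base : motive v (.refl T v))
    (step : ∀ x, x ≠ v → ∀ h : T.InSubtree v (T.parent x), motive (T.parent x) h →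
      motive x (h.trans (T.inSubtree_parent_self x))) :
    motive x h := by
  obtain ⟨n, hn⟩ := h
  induction n generalizing x with
  | zero => obtain rfl : x = v := hn; exact base
  | succ n ih =>
    by_cases hx : x = v
    · subst hx; exact base
    · exact step x hx ⟨n, hn⟩ (ih hn)

theorem InSubtree.exists_isChild (h : T.InSubtree v x) (hx : x ≠ v) :
    ∃ a, T.IsChild a v ∧ T.InSubtree a x := by
  induction h using InSubtree.induction_on with
  | base => exact absurd rfl hx
  | step x _ _ ih =>
    by_cases hpx : T.parent x = v
    · exact ⟨x, ⟨hx, hpx⟩, .refl T x⟩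
    · obtain ⟨a, hav, hax⟩ := ih hpx
      exact ⟨a, hav, hax.trans (T.inSubtree_parent_self x)⟩

theorem IsChild.eq_of_inSubtree_of_ne (ha : T.IsChild a v) (hb : T.IsChild b v) (hab : a ≠ b)
    (hax : T.InSubtree a x) (hby : T.InSubtree b y)
    (hvz : T.InSubtree v z) (hzx : T.InSubtree z x) (hzy : T.InSubtree z y) : z = v := by
  by_contra hz
  obtain ⟨c, hc, hcz⟩ := hvz.exists_isChild hz
  exact hab ((ha.eq_of_inSubtree hc hax (hcz.trans hzx)).trans
    (hc.eq_of_inSubtree hb (hcz.trans hzy) hby))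

theorem wellFounded_isChild [Finite V] (T : RTree V) : WellFounded T.IsChild := by
  let below (x v : V) : Prop := T.InSubtree v x ∧ x ≠ v
  have : IsTrans V below := ⟨fun x y z hxy hyz => ⟨hyz.1.trans hxy.1, by
    rintro rfl
    exact hxy.2 (hyz.1.antisymm hxy.1)⟩⟩
  have : Std.Irrefl below := ⟨fun _ h => h.2 rfl⟩
  exact Subrelation.wf (r := below) (fun h => ⟨h.inSubtree, h.1⟩)
    (Finite.wellFounded_of_trans_of_irrefl below)

section Edges

variable [Fintype V] [DecidableEq V]

theorem mem_edges {e : V × V} :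
    e ∈ T.edges ↔ e.1 ≠ e.2 ∧ (T.parent e.1 = e.2 ∨ T.parent e.2 = e.1) := by
  simp [edges]

theorem swap_mem_edges {e : V × V} : e.swap ∈ T.edges ↔ e ∈ T.edges := by
  simp only [mem_edges, Prod.fst_swap, Prod.snd_swap]
  tauto

theorem IsChild.eq_of_mem_edges {e : V × V} (ha : T.IsChild a v) (hb : T.IsChild b v)
    (he : e ∈ T.edges) (hae : T.InSubtree a e.1 ∨ T.InSubtree a e.2)
    (hbe : T.InSubtree b e.1 ∨ T.InSubtree b e.2) : a = b := by
  obtain ⟨c, hac, hbc⟩ : ∃ c, T.InSubtree a c ∧ T.InSubtree b c := by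
    rcases (mem_edges.1 he).2 with h | h
    · have descend {d : V} (hd : T.InSubtree d e.1 ∨ T.InSubtree d e.2) : T.InSubtree d e.1 :=
        hd.elim id fun hd => hd.trans ⟨1, h⟩
      exact ⟨e.1, descend hae, descend hbe⟩
    · have descend {d : V} (hd : T.InSubtree d e.1 ∨ T.InSubtree d e.2) : T.InSubtree d e.2 :=
        hd.elim (fun hd => hd.trans ⟨1, h⟩) id
      exact ⟨e.2, descend hae, descend hbe⟩
  exact ha.eq_of_inSubtree hb hac hbc

end Edges

end RTree

section OnUp

variable {V : Type*} {T : RTree V} {v x a : V} {e : V × V}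

theorem not_onUp_self : ¬onUp T v v e :=
  fun ⟨_, _, _, h⟩ => h 0 (Nat.zero_le _) rfl

theorem onUp_iff_of_ne (hx : x ≠ v) :
    onUp T v x e ↔ e = (x, T.parent x) ∨ onUp T v (T.parent x) e := by
  constructor
  · rintro ⟨_ | i, h₁, h₂, hv⟩
    · obtain rfl : x = e.1 := h₁
      exact .inl (Prod.ext rfl h₂.symm)
    · exact .inr ⟨i, h₁, h₂, fun j hj => hv (j + 1) (Nat.succ_le_succ hj)⟩
  · rintro (rfl | ⟨i, h₁, h₂, hv⟩)
    · refine ⟨0, rfl, rfl, fun j hj => ?_⟩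
      rwa [Nat.le_zero.1 hj]
    · refine ⟨i + 1, h₁, h₂, fun j hj => ?_⟩
      cases j with
      | zero => exact hx
      | succ j => exact hv j (Nat.le_of_succ_le_succ hj)

theorem onUp.inSubtree (h : onUp T v x e) (hx : T.InSubtree v x) :
    T.InSubtree v e.1 ∧ T.InSubtree v e.2 := by
  induction hx using RTree.InSubtree.induction_on with
  | base => exact absurd h not_onUp_self
  | step x hxv hpx ih =>
    rcases (onUp_iff_of_ne hxv).1 h with rfl | h
    · exact ⟨hpx.trans (T.inSubtree_parent_self x), hpx⟩
    · exact ih h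

theorem onUp_iff_of_isChild (ha : T.IsChild a v) (hx : T.InSubtree a x) :
    onUp T v x e ↔ e = (a, v) ∨ onUp T a x e := by
  induction hx using RTree.InSubtree.induction_on with
  | base => simp only [onUp_iff_of_ne ha.1, ha.2, not_onUp_self]
  | step x hxa hpx ih =>
    have hxv : x ≠ v := by
      rintro rfl
      exact ha.not_inSubtree (hpx.trans (T.inSubtree_parent_self x))
    rw [onUp_iff_of_ne hxv, onUp_iff_of_ne hxa, ih, or_left_comm]

theorem not_onDown_self : ¬onDown T v v e := not_onUp_self

theorem onDown.inSubtree (h : onDown T v x e) (hx : T.InSubtree v x) :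
    T.InSubtree v e.1 ∧ T.InSubtree v e.2 :=
  (onUp.inSubtree h hx).symm

theorem onDown_iff_of_isChild (ha : T.IsChild a v) (hx : T.InSubtree a x) :
    onDown T v x e ↔ e = (v, a) ∨ onDown T a x e := by
  simp only [onDown, onUp_iff_of_isChild ha hx, Prod.ext_iff, and_comm]

end OnUp

section UpDownEdges

variable {V : Type*} [Fintype V] {T : RTree V} {v w x : V} {e : V × V}

theorem mem_upEdges : e ∈ upEdges T v w ↔ onUp T v w e := Finset.mem_filter_univ e

theorem mem_downEdges : e ∈ downEdges T v w ↔ onDown T v w e := Finset.mem_filter_univ e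

theorem notMem_upEdges_of_isChild (hx : T.IsChild x v) (hw : T.InSubtree x w) :
    (x, v) ∉ upEdges T x w := fun h =>
  hx.not_inSubtree ((mem_upEdges.1 h).inSubtree hw).2

theorem notMem_downEdges_of_isChild (hx : T.IsChild x v) (hw : T.InSubtree x w) :
    (v, x) ∉ downEdges T x w := fun h =>
  hx.not_inSubtree ((mem_downEdges.1 h).inSubtree hw).1

variable [DecidableEq V]

theorem upEdges_eq_insert_of_isChild (hx : T.IsChild x v) (hw : T.InSubtree x w) :
    upEdges T v w = insert (x, v) (upEdges T x w) := by
  ext e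
  rw [Finset.mem_insert, mem_upEdges, mem_upEdges, onUp_iff_of_isChild hx hw]

theorem downEdges_eq_insert_of_isChild (hx : T.IsChild x v) (hw : T.InSubtree x w) :
    downEdges T v w = insert (v, x) (downEdges T x w) := by
  ext e
  rw [Finset.mem_insert, mem_downEdges, mem_downEdges, onDown_iff_of_isChild hx hw]

end UpDownEdges

section DiPaths

variable {α : Type*}

theorem pathEdges_append_cons (l m : List α) (b : α) :
    pathEdges (l ++ b :: m) = pathEdges (l ++ [b]) ++ pathEdges (b :: m) := by
  induction l with
  | nil => rfl
  | cons x l ih =>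
    cases l with
    | nil => rfl
    | cons y l => exact congrArg ((x, y) :: ·) ih

theorem pathEdges_reverse (p : List α) :
    pathEdges p.reverse = ((pathEdges p).map Prod.swap).reverse := by
  induction p with
  | nil => rfl
  | cons x l ih =>
    cases l with
    | nil => rfl
    | cons y l =>
      calc pathEdges (x :: y :: l).reverse = pathEdges (l.reverse ++ y :: [x]) := by simp
        _ = pathEdges (y :: l).reverse ++ [(y, x)] := by
          rw [pathEdges_append_cons, List.reverse_cons]; rfl
        _ = ((pathEdges (x :: y :: l)).map Prod.swap).reverse := by
          rw [ih, show pathEdges (x :: y :: l) = (x, y) :: pathEdges (y :: l) from rfl]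
          simp

namespace IsDiPath

variable {E : α → α → Prop} {a b c x : α} {p q : List α}

theorem singleton (E : α → α → Prop) (a : α) : IsDiPath E a a [a] :=
  ⟨rfl, rfl, List.isChain_singleton a, List.nodup_singleton a⟩

theorem exists_eq_cons (h : IsDiPath E a b p) : ∃ l, p = a :: l :=
  List.head?_eq_some_iff.1 h.1

theorem exists_eq_concat (h : IsDiPath E a b p) : ∃ l, p = l ++ [b] :=
  List.getLast?_eq_some_iff.1 h.2.1

theorem cons (hxa : E x a) (hx : x ∉ p) (h : IsDiPath E a b p) : IsDiPath E x b (x :: p) := by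
  obtain ⟨l, rfl⟩ := h.exists_eq_cons
  exact ⟨rfl, h.2.1, List.isChain_cons_cons.2 ⟨hxa, h.2.2.1⟩, List.nodup_cons.2 ⟨hx, h.2.2.2⟩⟩

theorem reverse (hE : ∀ ⦃c d⦄, E c d → E d c) (h : IsDiPath E a b p) :
    IsDiPath E b a p.reverse :=
  ⟨List.head?_reverse.trans h.2.1, List.getLast?_reverse.trans h.1,
    List.isChain_reverse.2 (h.2.2.1.imp hE), List.nodup_reverse.2 h.2.2.2⟩

theorem exists_trans (hp : IsDiPath E a b p) (hq : IsDiPath E b c q)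
    (hpq : ∀ z ∈ p, z ∈ q → z = b) :
    ∃ r, IsDiPath E a c r ∧ (∀ z ∈ r, z ∈ p ∨ z ∈ q) ∧
      pathEdges r = pathEdges p ++ pathEdges q := by
  obtain ⟨l, rfl⟩ := hp.exists_eq_concat
  obtain ⟨m, rfl⟩ := hq.exists_eq_cons
  obtain ⟨hpa, -, hpE, hpn⟩ := hp
  obtain ⟨-, hqc, hqE, hqn⟩ := hq
  have hbl : b ∉ l := fun h =>
    (List.nodup_append.1 hpn).2.2 b h b (List.mem_singleton_self b) rfl
  have hdisj : l.Disjoint (b :: m) := fun z hzl hzm =>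
    hbl (hpq z (List.mem_append_left _ hzl) hzm ▸ hzl)
  refine ⟨l ++ b :: m, ⟨?_, ?_, List.isChain_split.2 ⟨hpE, hqE⟩,
    (List.nodup_append'.2 ⟨hpn.of_append_left, hqn, hdisj⟩)⟩, ?_, pathEdges_append_cons l m b⟩
  · cases l <;> exact hpa
  · simpa using hqc
  · intro z hz
    simp only [List.mem_append] at hz ⊢
    tauto

end IsDiPath

end DiPaths

section TreePaths

variable {V : Type*} [Fintype V] [DecidableEq V] {T : RTree V} {v x y : V}

theorem exists_isDiPath_up (hx : T.InSubtree v x) :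
    ∃ p, IsDiPath (fun c d => (c, d) ∈ T.edges) x v p ∧
      (∀ z ∈ p, T.InSubtree v z ∧ T.InSubtree z x) ∧ ∀ e ∈ pathEdges p, onUp T v x e := by
  induction hx using RTree.InSubtree.induction_on with
  | base =>
    refine ⟨[v], .singleton _ v, fun z hz => ?_, fun e he => absurd he (List.not_mem_nil)⟩
    rw [List.mem_singleton.1 hz]
    exact ⟨.refl T v, .refl T v⟩
  | step x hxv hpx ih =>
    obtain ⟨p, hp, hpz, hpe⟩ := ih
    have hvx : T.InSubtree v x := hpx.trans (T.inSubtree_parent_self x)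
    have hne : T.parent x ≠ x := hvx.parent_ne hxv
    have hxp : x ∉ p := fun h => hne ((T.inSubtree_parent_self x).antisymm (hpz x h).2)
    refine ⟨x :: p, hp.cons (RTree.mem_edges.2 ⟨hne.symm, .inl rfl⟩) hxp, ?_, ?_⟩
    · rintro z (_ | ⟨_, hz⟩)
      · exact ⟨hvx, .refl T x⟩
      · exact ⟨(hpz z hz).1, (hpz z hz).2.trans (T.inSubtree_parent_self x)⟩
    · obtain ⟨l, rfl⟩ := hp.exists_eq_cons
      rintro e (_ | ⟨_, he⟩)
      · exact (onUp_iff_of_ne hxv).2 (.inl rfl)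
      · exact (onUp_iff_of_ne hxv).2 (.inr (hpe e he))

theorem exists_isDiPath_down (hy : T.InSubtree v y) :
    ∃ p, IsDiPath (fun c d => (c, d) ∈ T.edges) v y p ∧
      (∀ z ∈ p, T.InSubtree v z ∧ T.InSubtree z y) ∧ ∀ e ∈ pathEdges p, onDown T v y e := by
  obtain ⟨p, hp, hpz, hpe⟩ := exists_isDiPath_up hy
  refine ⟨p.reverse, hp.reverse fun c d h => RTree.swap_mem_edges.1 h,
    fun z hz => hpz z (List.mem_reverse.1 hz), fun e he => ?_⟩
  rw [pathEdges_reverse, List.mem_reverse] at he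
  obtain ⟨e', he', rfl⟩ := List.mem_map.1 he
  exact hpe e' he'

theorem exists_isDiPath_up_down (hx : T.InSubtree v x) (hy : T.InSubtree v y)
    (hxy : ∀ z, T.InSubtree v z → T.InSubtree z x → T.InSubtree z y → z = v) :
    ∃ p, IsDiPath (fun c d => (c, d) ∈ T.edges) x y p ∧ (∀ z ∈ p, T.InSubtree v z) ∧
      ∀ e ∈ pathEdges p, onUp T v x e ∨ onDown T v y e := by
  obtain ⟨p, hp, hpz, hpe⟩ := exists_isDiPath_up hx
  obtain ⟨q, hq, hqz, hqe⟩ := exists_isDiPath_down hy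
  obtain ⟨r, hr, hrz, hre⟩ := hp.exists_trans hq
    fun z hzp hzq => hxy z (hpz z hzp).1 (hpz z hzp).2 (hqz z hzq).2
  refine ⟨r, hr, fun z hz => (hrz z hz).elim (fun h => (hpz z h).1) (fun h => (hqz z h).1),
    fun e he => ?_⟩
  rw [hre, List.mem_append] at he
  exact he.imp (hpe e) (hqe e)

end TreePaths

section Routes

variable {VS VR : Type*} {τ : ℕ} {I : VNEP VS VR τ} {T : RTree VS} {v x : VS} {X : Finset VR}
  {M : Mapping VS VR} {e : VR × VR} {eS : VS × VS}

/-- The set of substrate edges of `T_v` that the request edge `e` occupies under a mapping `M` of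
`G_R[X]` into `T_v`: the edges of its path if `e` lies in `G_R[X]`, and the edges between `v` and
the image of its endpoint in `X` if `e` is in `cut(X)` or `cut⁻(X)`. -/
def Mapping.route (T : RTree VS) (v : VS) (X : Finset VR) (M : Mapping VS VR) (e : VR × VR) :
    Set (VS × VS) :=
  {eS | e.1 ∈ X ∧ e.2 ∈ X ∧ eS ∈ pathEdges (M.mE e) ∨
    e.1 ∈ X ∧ e.2 ∉ X ∧ onUp T v (M.mV e.1) eS ∨
    e.1 ∉ X ∧ e.2 ∈ X ∧ onDown T v (M.mV e.2) eS}

/-- The total demand in resource `t` on the substrate edge `eS` under a mapping `M` of `G_R[X]`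
into `T_v`, the edges of `cut(X)` and `cut⁻(X)` included: the left-hand side of the capacity
condition for desirable mappings. -/
noncomputable def Mapping.edgeLoad (I : VNEP VS VR τ) (T : RTree VS) (v : VS) (X : Finset VR)
    (M : Mapping VS VR) (eS : VS × VS) (t : Fin τ) : ℝ≥0 :=
  ∑ e ∈ I.ER with eS ∈ M.route T v X e, I.dRe e t

/-- The requirement that `M` maps `G_R[X]` into `T_v`, regardless of capacities. -/
structure Mapping.MapsInto (I : VNEP VS VR τ) (T : RTree VS) (v : VS) (X : Finset VR)
    (M : Mapping VS VR) : Prop where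
  mV_inSubtree : ∀ w ∈ X, T.InSubtree v (M.mV w)
  isDiPath : ∀ e ∈ ERin I X, IsDiPath (fun a b => (a, b) ∈ I.ES) (M.mV e.1) (M.mV e.2) (M.mE e)
  mE_inSubtree : ∀ e ∈ ERin I X, ∀ z ∈ M.mE e, T.InSubtree v z

theorem Mapping.MapsInto.of_isChild (hx : T.IsChild x v) (hM : M.MapsInto I T x X) :
    M.MapsInto I T v X where
  mV_inSubtree w hw := hx.inSubtree.trans (hM.mV_inSubtree w hw)
  isDiPath := hM.isDiPath
  mE_inSubtree e he z hz := hx.inSubtree.trans (hM.mE_inSubtree e he z hz)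

theorem Mapping.MapsInto.inSubtree_of_mem_route (hM : M.MapsInto I T v X) (he : e ∈ I.ER)
    (heS : eS ∈ M.route T v X e) : T.InSubtree v eS.1 ∧ T.InSubtree v eS.2 := by
  rcases heS with ⟨h₁, h₂, h⟩ | ⟨h₁, -, h⟩ | ⟨-, h₂, h⟩
  · have hmem := List.of_mem_zip h
    have hpath := hM.mE_inSubtree e (Finset.mem_filter.2 ⟨he, h₁, h₂⟩)
    exact ⟨hpath _ hmem.1, hpath _ (List.mem_of_mem_tail hmem.2)⟩
  · exact h.inSubtree (hM.mV_inSubtree _ h₁)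
  · exact h.inSubtree (hM.mV_inSubtree _ h₂)

theorem Mapping.mem_route_of_isChild (hx : T.IsChild x v)
    (hM : ∀ w ∈ X, T.InSubtree x (M.mV w)) (he : e ∈ I.ER) (heS : eS ∈ M.route T v X e) :
    eS ∈ M.route T x X e ∨ (e ∈ cutP I X ∧ eS = (x, v)) ∨ (e ∈ cutN I X ∧ eS = (v, x)) := by
  rcases heS with h | ⟨h₁, h₂, h⟩ | ⟨h₁, h₂, h⟩
  · exact .inl (.inl h)
  · rcases (onUp_iff_of_isChild hx (hM _ h₁)).1 h with rfl | h
    · exact .inr (.inl ⟨Finset.mem_filter.2 ⟨he, h₁, h₂⟩, rfl⟩)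
    · exact .inl (.inr (.inl ⟨h₁, h₂, h⟩))
  · rcases (onDown_iff_of_isChild hx (hM _ h₂)).1 h with rfl | h
    · exact .inr (.inr ⟨Finset.mem_filter.2 ⟨he, h₁, h₂⟩, rfl⟩)
    · exact .inl (.inr (.inr ⟨h₁, h₂, h⟩))

theorem Mapping.MapsInto.inSubtree_or_of_mem_route (hM : M.MapsInto I T x X) (hx : T.IsChild x v)
    (he : e ∈ I.ER) (heS : eS ∈ M.route T v X e) :
    T.InSubtree x eS.1 ∨ T.InSubtree x eS.2 := by
  obtain h | ⟨-, rfl⟩ | ⟨-, rfl⟩ := Mapping.mem_route_of_isChild hx hM.mV_inSubtree he heS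
  · exact .inl (hM.inSubtree_of_mem_route he h).1
  · exact .inl (.refl T x)
  · exact .inr (.refl T x)

theorem Mapping.edgeLoad_eq (I : VNEP VS VR τ) (T : RTree VS) (v : VS) (X : Finset VR)
    (M : Mapping VS VR) (eS : VS × VS) (t : Fin τ) :
    M.edgeLoad I T v X eS t =
      (∑ e ∈ (ERin I X).filter (fun e => eS ∈ pathEdges (M.mE e)), I.dRe e t) +
        ∑ e ∈ EvSet I T v X M.mV eS, I.dRe e t := by
  have hdisj : Disjoint ((ERin I X).filter fun e => eS ∈ pathEdges (M.mE e))
      (EvSet I T v X M.mV eS) := by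
    rw [Finset.disjoint_left]
    intro e
    simp only [ERin, EvSet, cutP, cutN, Finset.mem_union, Finset.mem_filter]
    tauto
  rw [Mapping.edgeLoad, ← Finset.sum_union hdisj]
  refine Finset.sum_congr (Finset.ext fun e => ?_) fun _ _ => rfl
  simp only [ERin, EvSet, cutP, cutN, Finset.mem_union, Finset.mem_filter]
  simp only [Mapping.route, Set.mem_ofPred_eq]
  tauto

theorem desirable_iff : Desirable I T v X M ↔ M.MapsInto I T v X ∧
    (∀ s t, ((∑ w ∈ X with M.mV w = s, I.dRv w t : ℝ≥0) : ℝ≥0∞) ≤ I.dSv s t) ∧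
    ∀ eS ∈ I.ES, ∀ t, (M.edgeLoad I T v X eS t : ℝ≥0∞) ≤ I.dSe eS t := by
  constructor
  · rintro ⟨hV, hE, hnode, hedge⟩
    have hM : M.MapsInto I T v X := ⟨hV, fun e he => (hE e he).1, fun e he => (hE e he).2⟩
    refine ⟨hM, hnode, fun eS heS t => ?_⟩
    by_cases hin : T.InSubtree v eS.1 ∧ T.InSubtree v eS.2
    · rw [Mapping.edgeLoad_eq]
      exact hedge eS heS hin.1 hin.2 t
    · have hunused : ∀ e ∈ I.ER, eS ∉ M.route T v X e := fun e he h =>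
        hin (hM.inSubtree_of_mem_route he h)
      simp [Mapping.edgeLoad, Finset.filter_false_of_mem hunused]
  · rintro ⟨hM, hnode, hedge⟩
    refine ⟨hM.mV_inSubtree, fun e he => ⟨hM.isDiPath e he, hM.mE_inSubtree e he⟩, hnode,
      fun eS heS _ _ t => ?_⟩
    rw [← Mapping.edgeLoad_eq]
    exact hedge eS heS t

theorem inducedCost_eq_sum_route [Fintype VS] [DecidableEq VS] (I : VNEP VS VR τ) (T : RTree VS)
    (v : VS) (X : Finset VR) (M : Mapping VS VR) :
    inducedCost I T v X M = (∑ w ∈ X, ∑ t, I.dRv w t * I.cSv (M.mV w) t) +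
      ∑ e ∈ I.ER, ∑ eS with eS ∈ M.route T v X e, ∑ t, I.dRe e t * I.cSe eS t := by
  simp only [inducedCost, ERin, cutP, cutN, Finset.sum_filter, add_assoc,
    ← Finset.sum_add_distrib]
  congr 1
  refine Finset.sum_congr rfl fun e _ => ?_
  by_cases h₁ : e.1 ∈ X <;> by_cases h₂ : e.2 ∈ X
  · have hpath : (pathEdges (M.mE e)).toFinset =
        Finset.univ.filter fun eS => eS ∈ pathEdges (M.mE e) := by ext; simp
    simp [Mapping.route, Finset.sum_filter, h₁, h₂, hpath]
  all_goals simp [Mapping.route, upEdges, downEdges, Finset.sum_filter, h₁, h₂]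

end Routes

section Leaf

variable {VS VR : Type*} {τ : ℕ} {I : VNEP VS VR τ} {T : RTree VS} {v : VS} {X : Finset VR}

/-- The mapping that places every request node on `v` and routes every request edge along the
path of length zero at `v`. -/
def Mapping.const (VR : Type*) {VS : Type*} (v : VS) : Mapping VS VR := ⟨fun _ => v, fun _ => [v]⟩

theorem Mapping.route_const (e : VR × VR) : (Mapping.const VR v).route T v X e = ∅ := by
  simp [route, const, pathEdges, not_onUp_self, not_onDown_self]

theorem Mapping.mapsInto_const : (Mapping.const VR v).MapsInto I T v X where
  mV_inSubtree _ _ := .refl T v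
  isDiPath _ _ := .singleton _ v
  mE_inSubtree _ _ _ hz := List.mem_singleton.1 hz ▸ .refl T v

theorem desirable_const (hcap : ∀ t, ((∑ w ∈ X, I.dRv w t : ℝ≥0) : ℝ≥0∞) ≤ I.dSv v t) :
    Desirable I T v X (Mapping.const VR v) := by
  refine desirable_iff.2 ⟨Mapping.mapsInto_const, fun s t => ?_, fun eS _ t => ?_⟩
  · rcases eq_or_ne v s with rfl | hs
    · simpa [Mapping.const] using hcap t
    · simp [Mapping.const, hs]
  · simp [Mapping.edgeLoad, Mapping.route_const]

theorem inducedCost_const [Fintype VS] [DecidableEq VS] :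
    inducedCost I T v X (Mapping.const VR v) = ∑ w ∈ X, ∑ t, I.dRv w t * I.cSv v t := by
  simp only [inducedCost_eq_sum_route, Mapping.route_const]
  simp [Mapping.const]

end Leaf

section Lift

variable {VS VR : Type*} {τ : ℕ}

/-- The capacity condition in the definition of `f(v, x, X)`: the tree edges between `x` and its
parent `v` can carry the demands of `cut(X)` and `cut⁻(X)`. -/
def CutFits (I : VNEP VS VR τ) (v x : VS) (X : Finset VR) : Prop :=
  (∀ t, ((∑ e ∈ cutP I X, I.dRe e t : ℝ≥0) : ℝ≥0∞) ≤ I.dSe (x, v) t) ∧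
    ∀ t, ((∑ e ∈ cutN I X, I.dRe e t : ℝ≥0) : ℝ≥0∞) ≤ I.dSe (v, x) t

/-- The cost in the definition of `f(v, x, X)` of carrying the demands of `cut(X)` and `cut⁻(X)`
over the tree edges between `x` and its parent `v`. -/
noncomputable def cutCost (I : VNEP VS VR τ) (v x : VS) (X : Finset VR) : ℝ≥0 :=
  (∑ e ∈ cutN I X, ∑ t, I.dRe e t * I.cSe (v, x) t) +
    ∑ e ∈ cutP I X, ∑ t, I.dRe e t * I.cSe (x, v) t

variable {I : VNEP VS VR τ} {T : RTree VS} {D : Finset VR → VS → ℝ≥0∞} {v x : VS}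
  {X : Finset VR} {M : Mapping VS VR}

theorem fDP_eq_of_cutFits (h : CutFits I v x X) :
    fDP I D v x X = D X x + (cutCost I v x X : ℝ≥0∞) := by
  refine (if_pos h).trans ?_
  rw [cutCost, ENNReal.coe_add, add_assoc]

theorem cutFits_of_fDP_ne_top (h : fDP I D v x X ≠ ⊤) : CutFits I v x X := by
  by_contra hfits
  exact h (if_neg hfits)

theorem Desirable.of_isChild (hx : T.IsChild x v) (hM : Desirable I T x X M)
    (hcut : CutFits I v x X) : Desirable I T v X M := by
  obtain ⟨hinto, hnode, hedge⟩ := desirable_iff.1 hM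
  have hroute {e : VR × VR} {eS : VS × VS} (he : e ∈ I.ER) (heS : eS ∈ M.route T v X e) :=
    Mapping.mem_route_of_isChild hx hinto.mV_inSubtree he heS
  have hv {e : VR × VR} {eS : VS × VS} (he : e ∈ I.ER) (heS : eS ∈ M.route T x X e) :
      eS.1 ≠ v ∧ eS.2 ≠ v := by
    have hin := hinto.inSubtree_of_mem_route he heS
    exact ⟨fun h => hx.not_inSubtree (h ▸ hin.1), fun h => hx.not_inSubtree (h ▸ hin.2)⟩
  refine desirable_iff.2 ⟨hinto.of_isChild hx, hnode, fun eS heS t => ?_⟩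
  suffices ∃ S : Finset (VR × VR), (I.ER.filter fun e => eS ∈ M.route T v X e) ⊆ S ∧
      ((∑ e ∈ S, I.dRe e t : ℝ≥0) : ℝ≥0∞) ≤ I.dSe eS t by
    obtain ⟨S, hS, hcap⟩ := this
    exact (ENNReal.coe_le_coe.2 (Finset.sum_le_sum_of_subset hS)).trans hcap
  by_cases hxv : eS = (x, v)
  · subst hxv
    refine ⟨cutP I X, fun e he => ?_, hcut.1 t⟩
    obtain ⟨he, heS⟩ := Finset.mem_filter.1 he
    rcases hroute he heS with h | ⟨h, -⟩ | ⟨-, h⟩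
    · exact absurd rfl (hv he h).2
    · exact h
    · exact absurd (Prod.ext_iff.1 h).1 hx.1
  by_cases hvx : eS = (v, x)
  · subst hvx
    refine ⟨cutN I X, fun e he => ?_, hcut.2 t⟩
    obtain ⟨he, heS⟩ := Finset.mem_filter.1 he
    rcases hroute he heS with h | ⟨-, h⟩ | ⟨h, -⟩
    · exact absurd rfl (hv he h).1
    · exact absurd h hxv
    · exact h
  · refine ⟨_, fun e he => ?_, hedge eS heS t⟩
    obtain ⟨he, heS⟩ := Finset.mem_filter.1 he
    rcases hroute he heS with h | ⟨-, h⟩ | ⟨-, h⟩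
    · exact Finset.mem_filter.2 ⟨he, h⟩
    · exact absurd h hxv
    · exact absurd h hvx

variable [Fintype VS] [DecidableEq VS]

theorem inducedCost_of_isChild (hx : T.IsChild x v) (hM : ∀ w ∈ X, T.InSubtree x (M.mV w)) :
    inducedCost I T v X M = inducedCost I T x X M + cutCost I v x X := by
  have hup : ∀ e ∈ cutP I X, ∑ eS ∈ upEdges T v (M.mV e.1), ∑ t, I.dRe e t * I.cSe eS t =
      ∑ t, I.dRe e t * I.cSe (x, v) t +
        ∑ eS ∈ upEdges T x (M.mV e.1), ∑ t, I.dRe e t * I.cSe eS t := by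
    intro e he
    have hw := hM _ (Finset.mem_filter.1 he).2.1
    rw [upEdges_eq_insert_of_isChild hx hw, Finset.sum_insert (notMem_upEdges_of_isChild hx hw)]
  have hdown : ∀ e ∈ cutN I X, ∑ eS ∈ downEdges T v (M.mV e.2), ∑ t, I.dRe e t * I.cSe eS t =
      ∑ t, I.dRe e t * I.cSe (v, x) t +
        ∑ eS ∈ downEdges T x (M.mV e.2), ∑ t, I.dRe e t * I.cSe eS t := by
    intro e he
    have hw := hM _ (Finset.mem_filter.1 he).2.2
    rw [downEdges_eq_insert_of_isChild hx hw,
      Finset.sum_insert (notMem_downEdges_of_isChild hx hw)]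
  rw [inducedCost, inducedCost, Finset.sum_congr rfl hup, Finset.sum_congr rfl hdown,
    Finset.sum_add_distrib, Finset.sum_add_distrib, cutCost]
  ring

theorem exists_desirable_of_fDP_lt_top (hx : T.IsChild x v)
    (hD : D X x < ⊤ →
      ∃ M : Mapping VS VR, Desirable I T x X M ∧ (inducedCost I T x X M : ℝ≥0∞) ≤ D X x)
    (hf : fDP I D v x X < ⊤) :
    ∃ M : Mapping VS VR, M.MapsInto I T x X ∧ Desirable I T v X M ∧
      (inducedCost I T v X M : ℝ≥0∞) ≤ fDP I D v x X := by
  have hcut : CutFits I v x X := cutFits_of_fDP_ne_top hf.ne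
  rw [fDP_eq_of_cutFits hcut] at hf ⊢
  obtain ⟨M, hM, hcost⟩ := hD (ENNReal.add_lt_top.1 hf).1
  have hinto := (desirable_iff.1 hM).1
  refine ⟨M, hinto, hM.of_isChild hx hcut, ?_⟩
  rw [inducedCost_of_isChild hx hinto.mV_inSubtree, ENNReal.coe_add]
  gcongr

end Lift

section Merge

variable {VS VR : Type*} {τ : ℕ}

/-- `M` combines the mappings `Ma` of `G_R[A]` and `Mb` of `G_R[B]` into a mapping of
`G_R[A ∪ B]` into `T_v`: it agrees with them on nodes, and routes no request edge over a substrate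
edge that neither of them had it occupy. -/
structure Mapping.IsMerge (I : VNEP VS VR τ) (T : RTree VS) (v : VS) (A B : Finset VR)
    (Ma Mb M : Mapping VS VR) : Prop where
  mapsInto : M.MapsInto I T v (A ∪ B)
  mV_left : ∀ w ∈ A, M.mV w = Ma.mV w
  mV_right : ∀ w ∈ B, M.mV w = Mb.mV w
  route_subset : ∀ e ∈ I.ER, M.route T v (A ∪ B) e ⊆ Ma.route T v A e ∪ Mb.route T v B e

variable {I : VNEP VS VR τ} {T : RTree VS} {v a b : VS} {A B : Finset VR}
  {Ma Mb M : Mapping VS VR}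

theorem Mapping.IsMerge.nodeLoad_le (ha : T.IsChild a v) (hb : T.IsChild b v) (hab : a ≠ b)
    (hMa : Ma.MapsInto I T a A) (hMb : Mb.MapsInto I T b B) (hDa : Desirable I T v A Ma)
    (hDb : Desirable I T v B Mb) (hM : Mapping.IsMerge I T v A B Ma Mb M) (s : VS) (t : Fin τ) :
    ((∑ w ∈ A ∪ B with M.mV w = s, I.dRv w t : ℝ≥0) : ℝ≥0∞) ≤ I.dSv s t := by
  by_cases hs : T.InSubtree a s
  · refine le_trans (ENNReal.coe_le_coe.2 (Finset.sum_le_sum_of_subset fun w hw => ?_))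
      (hDa.2.2.1 s t)
    obtain ⟨hAB, rfl⟩ := Finset.mem_filter.1 hw
    have hwA : w ∈ A := (Finset.mem_union.1 hAB).resolve_right fun hwB => by
      rw [hM.mV_right w hwB] at hs
      exact hab (ha.eq_of_inSubtree hb hs (hMb.mV_inSubtree w hwB))
    exact Finset.mem_filter.2 ⟨hwA, (hM.mV_left w hwA).symm⟩
  · refine le_trans (ENNReal.coe_le_coe.2 (Finset.sum_le_sum_of_subset fun w hw => ?_))
      (hDb.2.2.1 s t)
    obtain ⟨hAB, rfl⟩ := Finset.mem_filter.1 hw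
    have hwB : w ∈ B := (Finset.mem_union.1 hAB).resolve_left fun hwA => by
      rw [hM.mV_left w hwA] at hs
      exact hs (hMa.mV_inSubtree w hwA)
    exact Finset.mem_filter.2 ⟨hwB, (hM.mV_right w hwB).symm⟩

variable [Fintype VS] [DecidableEq VS]

theorem Mapping.exists_merged_path (hES : I.ES = T.edges) (ha : T.IsChild a v)
    (hb : T.IsChild b v) (hab : a ≠ b) (hAB : Disjoint A B) (hMa : Ma.MapsInto I T a A)
    (hMb : Mb.MapsInto I T b B) {m : VR → VS} (hmA : ∀ w ∈ A, m w = Ma.mV w)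
    (hmB : ∀ w ∈ B, m w = Mb.mV w) {e : VR × VR} (he : e ∈ ERin I (A ∪ B)) :
    ∃ p, IsDiPath (fun c d => (c, d) ∈ I.ES) (m e.1) (m e.2) p ∧ (∀ z ∈ p, T.InSubtree v z) ∧
      ∀ eS ∈ pathEdges p, eS ∈ Ma.route T v A e ∪ Mb.route T v B e := by
  have hB {w : VR} (hw : w ∈ A) : w ∉ B := Finset.disjoint_left.1 hAB hw
  have hA {w : VR} (hw : w ∈ B) : w ∉ A := Finset.disjoint_right.1 hAB hw
  have hvA := (hMa.of_isChild ha).mV_inSubtree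
  have hvB := (hMb.of_isChild hb).mV_inSubtree
  obtain ⟨heR, h₁, h₂⟩ := Finset.mem_filter.1 he
  rcases Finset.mem_union.1 h₁ with h₁ | h₁ <;> rcases Finset.mem_union.1 h₂ with h₂ | h₂
  · have heA : e ∈ ERin I A := Finset.mem_filter.2 ⟨heR, h₁, h₂⟩
    refine ⟨Ma.mE e, ?_, (hMa.of_isChild ha).mE_inSubtree e heA, ?_⟩
    · rw [hmA _ h₁, hmA _ h₂]
      exact hMa.isDiPath e heA
    · exact fun eS heS => .inl (.inl ⟨h₁, h₂, heS⟩)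
  · obtain ⟨p, hp, hpv, hpe⟩ := exists_isDiPath_up_down (hvA _ h₁) (hvB _ h₂) fun z =>
      ha.eq_of_inSubtree_of_ne hb hab (hMa.mV_inSubtree _ h₁) (hMb.mV_inSubtree _ h₂)
    refine ⟨p, by rwa [hES, hmA _ h₁, hmB _ h₂], hpv, fun eS heS => ?_⟩
    exact (hpe eS heS).imp (fun h => .inr (.inl ⟨h₁, hA h₂, h⟩))
      (fun h => .inr (.inr ⟨hB h₁, h₂, h⟩))
  · obtain ⟨p, hp, hpv, hpe⟩ := exists_isDiPath_up_down (hvB _ h₁) (hvA _ h₂) fun z =>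
      hb.eq_of_inSubtree_of_ne ha hab.symm (hMb.mV_inSubtree _ h₁) (hMa.mV_inSubtree _ h₂)
    refine ⟨p, by rwa [hES, hmB _ h₁, hmA _ h₂], hpv, fun eS heS => ?_⟩
    exact (hpe eS heS).symm.imp (fun h => .inr (.inr ⟨hA h₁, h₂, h⟩))
      (fun h => .inr (.inl ⟨h₁, hB h₂, h⟩))
  · have heB : e ∈ ERin I B := Finset.mem_filter.2 ⟨heR, h₁, h₂⟩
    refine ⟨Mb.mE e, ?_, (hMb.of_isChild hb).mE_inSubtree e heB, ?_⟩
    · rw [hmB _ h₁, hmB _ h₂]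
      exact hMb.isDiPath e heB
    · exact fun eS heS => .inr (.inl ⟨h₁, h₂, heS⟩)

theorem Mapping.exists_isMerge (hES : I.ES = T.edges) (ha : T.IsChild a v) (hb : T.IsChild b v)
    (hab : a ≠ b) (hAB : Disjoint A B) (hMa : Ma.MapsInto I T a A) (hMb : Mb.MapsInto I T b B) :
    ∃ M, Mapping.IsMerge I T v A B Ma Mb M := by
  have hA {w : VR} (hw : w ∈ B) : w ∉ A := Finset.disjoint_right.1 hAB hw
  let m (w : VR) : VS := if w ∈ A then Ma.mV w else Mb.mV w
  have hmA : ∀ w ∈ A, m w = Ma.mV w := fun w hw => if_pos hw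
  have hmB : ∀ w ∈ B, m w = Mb.mV w := fun w hw => if_neg (hA hw)
  choose! p hp hpv hpe using fun e (he : e ∈ ERin I (A ∪ B)) =>
    Mapping.exists_merged_path hES ha hb hab hAB hMa hMb hmA hmB he
  refine ⟨⟨m, p⟩, ⟨fun w hw => ?_, hp, hpv⟩, hmA, hmB, fun e he eS heS => ?_⟩
  · change T.InSubtree v (m w)
    rcases Finset.mem_union.1 hw with hw | hw
    · rw [hmA w hw]
      exact (hMa.of_isChild ha).mV_inSubtree w hw
    · rw [hmB w hw]
      exact (hMb.of_isChild hb).mV_inSubtree w hw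
  · rcases heS with ⟨h₁, h₂, h⟩ | ⟨h₁, h₂, h⟩ | ⟨h₁, h₂, h⟩
    · exact hpe e (Finset.mem_filter.2 ⟨he, h₁, h₂⟩) eS h
    · obtain ⟨h₂A, h₂B⟩ := Finset.notMem_union.1 h₂
      rcases Finset.mem_union.1 h₁ with h₁ | h₁
      · exact .inl (.inr (.inl ⟨h₁, h₂A, hmA _ h₁ ▸ h⟩))
      · exact .inr (.inr (.inl ⟨h₁, h₂B, hmB _ h₁ ▸ h⟩))
    · obtain ⟨h₁A, h₁B⟩ := Finset.notMem_union.1 h₁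
      rcases Finset.mem_union.1 h₂ with h₂ | h₂
      · exact .inl (.inr (.inr ⟨h₁A, h₂, hmA _ h₂ ▸ h⟩))
      · exact .inr (.inr (.inr ⟨h₁B, h₂, hmB _ h₂ ▸ h⟩))

theorem Mapping.IsMerge.inducedCost_le (hM : Mapping.IsMerge I T v A B Ma Mb M)
    (hAB : Disjoint A B) :
    inducedCost I T v (A ∪ B) M ≤ inducedCost I T v A Ma + inducedCost I T v B Mb := by
  have hnodes : ∑ w ∈ A ∪ B, ∑ t, I.dRv w t * I.cSv (M.mV w) t =
      ∑ w ∈ A, ∑ t, I.dRv w t * I.cSv (Ma.mV w) t +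
        ∑ w ∈ B, ∑ t, I.dRv w t * I.cSv (Mb.mV w) t := by
    rw [Finset.sum_union hAB]
    congr 1
    · exact Finset.sum_congr rfl fun w hw => by rw [hM.mV_left w hw]
    · exact Finset.sum_congr rfl fun w hw => by rw [hM.mV_right w hw]
  have hroutes (e : VR × VR) (he : e ∈ I.ER) (c : VS × VS → ℝ≥0) :
      ∑ eS with eS ∈ M.route T v (A ∪ B) e, c eS ≤
        ∑ eS with eS ∈ Ma.route T v A e, c eS + ∑ eS with eS ∈ Mb.route T v B e, c eS := by
    rw [← Finset.sum_union_inter, ← Finset.filter_or]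
    exact (Finset.sum_le_sum_of_subset
      (Finset.monotone_filter_right _ fun eS _ heS => hM.route_subset e he heS)).trans le_self_add
  simp only [inducedCost_eq_sum_route]
  rw [hnodes, add_add_add_comm, ← Finset.sum_add_distrib]
  gcongr with e he
  exact hroutes e he _

theorem Mapping.IsMerge.desirable (hES : I.ES = T.edges) (ha : T.IsChild a v)
    (hb : T.IsChild b v) (hab : a ≠ b) (hMa : Ma.MapsInto I T a A) (hMb : Mb.MapsInto I T b B)
    (hDa : Desirable I T v A Ma) (hDb : Desirable I T v B Mb)
    (hM : Mapping.IsMerge I T v A B Ma Mb M) : Desirable I T v (A ∪ B) M := by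
  obtain ⟨-, -, hedgeA⟩ := desirable_iff.1 hDa
  obtain ⟨-, -, hedgeB⟩ := desirable_iff.1 hDb
  refine desirable_iff.2 ⟨hM.mapsInto, fun s t => ?_, fun eS heS t => ?_⟩
  · exact hM.nodeLoad_le ha hb hab hMa hMb hDa hDb s t
  · by_cases hA : ∃ e ∈ I.ER, eS ∈ Ma.route T v A e
    · obtain ⟨e₀, he₀, hA⟩ := hA
      refine le_trans (ENNReal.coe_le_coe.2 (Finset.sum_le_sum_of_subset fun e he => ?_))
        (hedgeA eS heS t)
      obtain ⟨he, h⟩ := Finset.mem_filter.1 he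
      refine Finset.mem_filter.2 ⟨he, (hM.route_subset e he h).resolve_right
        fun hB => hab ?_⟩
      exact ha.eq_of_mem_edges hb (hES ▸ heS) (hMa.inSubtree_or_of_mem_route ha he₀ hA)
        (hMb.inSubtree_or_of_mem_route hb he hB)
    · refine le_trans (ENNReal.coe_le_coe.2 (Finset.sum_le_sum_of_subset fun e he => ?_))
        (hedgeB eS heS t)
      obtain ⟨he, h⟩ := Finset.mem_filter.1 he
      exact Finset.mem_filter.2 ⟨he, (hM.route_subset e he h).resolve_left
        fun h => hA ⟨e, he, h⟩⟩

end Merge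

section DPTable

variable {VS VR : Type*} {τ : ℕ} [Fintype VS] {I : VNEP VS VR τ} {T : RTree VS}
  {D : Finset VR → VS → ℝ≥0∞} {v a b : VS} {X : Finset VR}

theorem mem_childrenOf : a ∈ childrenOf T v ↔ T.IsChild a v := Finset.mem_filter_univ a

theorem IsDPTable.exists_fDP_add_fDP_eq (hD : IsDPTable I T D) (hab : a ≠ b)
    (hv : childrenOf T v = {a, b}) (X : Finset VR) :
    ∃ A ⊆ X, D X v = fDP I D v a A + fDP I D v b (X \ A) := by
  obtain ⟨A, hA, hmin⟩ := Finset.exists_mem_eq_inf X.powerset X.powerset_nonempty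
    fun A => fDP I D v a A + fDP I D v b (X \ A)
  exact ⟨A, Finset.mem_powerset.1 hA,
    (hD.2 v a b hab hv X).trans ((Finset.inf_eq_iInf _ _).symm.trans hmin)⟩

variable [DecidableEq VS]

theorem IsDPTable.exists_desirable_of_childrenOf_eq_empty (hD : IsDPTable I T D)
    (hv : childrenOf T v = ∅) (hX : D X v < ⊤) :
    ∃ M : Mapping VS VR, Desirable I T v X M ∧ (inducedCost I T v X M : ℝ≥0∞) ≤ D X v := by
  by_cases hcap : ∀ t, ((∑ w ∈ X, I.dRv w t : ℝ≥0) : ℝ≥0∞) ≤ I.dSv v t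
  · refine ⟨.const VR v, desirable_const hcap, ?_⟩
    rw [inducedCost_const, hD.1 v hv, if_pos hcap]
  · rw [hD.1 v hv, if_neg hcap] at hX
    exact absurd hX (lt_irrefl _)

theorem exists_desirable_union (hES : I.ES = T.edges) (ha : T.IsChild a v) (hb : T.IsChild b v)
    (hab : a ≠ b) {A B : Finset VR} (hAB : Disjoint A B) {Ma Mb : Mapping VS VR}
    (hMa : Ma.MapsInto I T a A) (hMb : Mb.MapsInto I T b B)
    (hDa : Desirable I T v A Ma) (hDb : Desirable I T v B Mb) :
    ∃ M : Mapping VS VR, Desirable I T v (A ∪ B) M ∧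
      inducedCost I T v (A ∪ B) M ≤ inducedCost I T v A Ma + inducedCost I T v B Mb := by
  obtain ⟨M, hM⟩ := Mapping.exists_isMerge hES ha hb hab hAB hMa hMb
  exact ⟨M, hM.desirable hES ha hb hab hMa hMb hDa hDb, hM.inducedCost_le hAB⟩

theorem IsDPTable.exists_desirable_of_childrenOf_eq_pair (hES : I.ES = T.edges)
    (hD : IsDPTable I T D) (hab : a ≠ b) (hv : childrenOf T v = {a, b})
    (ih : ∀ x, T.IsChild x v → ∀ Y, D Y x < ⊤ →
      ∃ M : Mapping VS VR, Desirable I T x Y M ∧ (inducedCost I T x Y M : ℝ≥0∞) ≤ D Y x)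
    (hX : D X v < ⊤) :
    ∃ M : Mapping VS VR, Desirable I T v X M ∧ (inducedCost I T v X M : ℝ≥0∞) ≤ D X v := by
  have ha : T.IsChild a v := mem_childrenOf.1 (by simp [hv])
  have hb : T.IsChild b v := mem_childrenOf.1 (by simp [hv])
  obtain ⟨A, hA, hmin⟩ := hD.exists_fDP_add_fDP_eq hab (by convert hv) X
  rw [hmin] at hX ⊢
  obtain ⟨hfa, hfb⟩ := ENNReal.add_lt_top.1 hX
  obtain ⟨Ma, hMa, hDa, hca⟩ := exists_desirable_of_fDP_lt_top ha (ih a ha A) hfa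
  obtain ⟨Mb, hMb, hDb, hcb⟩ := exists_desirable_of_fDP_lt_top hb (ih b hb (X \ A)) hfb
  obtain ⟨M, hM, hcost⟩ :=
    exists_desirable_union hES ha hb hab Finset.disjoint_sdiff hMa hMb hDa hDb
  rw [Finset.union_sdiff_of_subset hA] at hM hcost
  refine ⟨M, hM, (ENNReal.coe_le_coe.2 hcost).trans ?_⟩
  rw [ENNReal.coe_add]
  exact add_le_add hca hcb

theorem dp_table_yields_desirable_mapping_general (I : VNEP VS VR τ) (T : RTree VS)
    (hES : I.ES = T.edges)
    (hchildren : ∀ v, childrenOf T v = ∅ ∨ ∃ a b, a ≠ b ∧ childrenOf T v = {a, b})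
    (D : Finset VR → VS → ℝ≥0∞) (hD : IsDPTable I T D) (v : VS) :
    ∀ X : Finset VR, D X v < ⊤ → ∃ M : Mapping VS VR,
      Desirable I T v X M ∧ (inducedCost I T v X M : ℝ≥0∞) ≤ D X v := by
  induction v using T.wellFounded_isChild.induction with
  | _ v ih =>
    intro X hX
    rcases hchildren v with hv | ⟨a, b, hab, hv⟩
    · exact hD.exists_desirable_of_childrenOf_eq_empty hv hX
    · exact hD.exists_desirable_of_childrenOf_eq_pair hES hab hv ih hX

end DPTable

/-- Lemma 3.4 of the paper: in the DP setting, for every substrate node `v` and every subset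
`X` of request nodes, if `D[X, v] < ∞` then there is a desirable mapping of `G_R[X]` into
`T_v` whose induced cost is at most `D[X, v]`. -/
theorem dp_table_yields_desirable_mapping {VS VR : Type*} [Fintype VS] [DecidableEq VS]
    [Fintype VR] [DecidableEq VR] {τ : ℕ} (I : VNEP VS VR τ) (T : RTree VS)
    (hDP : DPSetting I T) (D : Finset VR → VS → ℝ≥0∞) (hD : IsDPTable I T D) :
    ∀ (v : VS) (X : Finset VR), D X v < ⊤ →
      ∃ M : Mapping VS VR, Desirable I T v X M ∧
        (inducedCost I T v X M : ℝ≥0∞) ≤ D X v := by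
  exact dp_table_yields_desirable_mapping_general I T hDP.1 hDP.2.1 D hD
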